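/- Let G be a finite simple graph that contains no cycle of length 3 and no induced cycle of odd length at least 5 (i.e., no set of k vertices, k odd and k ≥ 5, inducing exactly a cycle). Then G is bipartite. -/

import Mathlib

/-- `G` contains an induced subgraph isomorphic to `H`. -/
def ContainsInduced {V W : Type*} (G : SimpleGraph V) (H : SimpleGraph W) : Prop :=
  ∃ U : Set V, Nonempty (G.induce U ≃g H)

/-!
A graph that is not bipartite has a closed walk of odd length; take a shortest one. Two of its
vertices cut it into two arcs, of lengths `a` and `b`. A walk of length `d` between them closes up
with each arc, and one of the lengths `a + d`, `b + d` is odd because `a + b` is. By minimality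
that one is at least `a + b`, so `min a b ≤ d`. Hence the walk is an isometrically embedded cycle,
in particular an induced one.
-/

section

open SimpleGraph

variable {V W : Type*} {G : SimpleGraph V} {H : SimpleGraph W} {u : V}

theorem containsInduced_iff_isIndContained : ContainsInduced G H ↔ H ⊴ G := by
  rw [isIndContained_iff_exists_iso_induce]
  exact exists_congr fun _ ↦ ⟨fun ⟨e⟩ ↦ ⟨e.symm⟩, fun ⟨e⟩ ↦ ⟨e.symm⟩⟩

theorem exists_isIndepSet_and_isIndepSet_compl (hG : G.IsBipartite) :
    ∃ S : Set V, G.IsIndepSet S ∧ G.IsIndepSet Sᶜ := by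
  obtain ⟨C⟩ := hG
  have h_compl : (C.colorClass 0)ᶜ = C.colorClass 1 := by
    ext v
    change C v ≠ 0 ↔ C v = 1
    omega
  exact ⟨C.colorClass 0, C.isIndepSet_colorClass 0, h_compl ▸ C.isIndepSet_colorClass 1⟩

theorem exists_walk_getVert_length_eq_val_sub (p : G.Walk u u) (i j : Fin p.length) :
    ∃ q : G.Walk (p.getVert i) (p.getVert j), q.length = (j - i).val := by
  rcases le_or_gt i j with hij | hji
  · have h_start : (p.take j).getVert i = p.getVert i := by
      rw [p.take_getVert, min_eq_right (Fin.le_def.1 hij)]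
    exact ⟨((p.take j).drop i).copy h_start rfl, by
      rw [Walk.length_copy, Walk.drop_length, Walk.take_length, min_eq_left j.is_lt.le,
        Fin.sub_val_of_le hij]⟩
  · refine ⟨(p.drop i).append (p.take j), ?_⟩
    rw [Walk.length_append, Walk.drop_length, Walk.take_length, Fin.coe_sub_iff_lt.2 hji]
    omega

theorem val_sub_add_val_sub_of_ne {n : ℕ} {i j : Fin n} (hij : i ≠ j) :
    (i - j).val + (j - i).val = n := by
  rcases lt_or_gt_of_ne hij with h | h <;>
  · rw [Fin.coe_sub_iff_lt.2 h, Fin.sub_val_of_le h.le]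
    omega

/-- A closed walk of odd length that is shortest among all such walks in the graph, whatever
their base points. -/
structure IsShortestOddClosedWalk (p : G.Walk u u) : Prop where
  odd_length : Odd p.length
  length_le {v : V} (q : G.Walk v v) : Odd q.length → p.length ≤ q.length

theorem exists_isShortestOddClosedWalk (hG : ¬ G.IsBipartite) :
    ∃ (u : V) (p : G.Walk u u), IsShortestOddClosedWalk p := by
  simp only [IsBipartite, two_colorable_iff_forall_loop_even, not_forall,
    Nat.not_even_iff_odd] at hG
  obtain ⟨v, q, hq⟩ := hG
  obtain ⟨⟨u, p⟩, hp_odd, hp_min⟩ := exists_minimalFor_of_wellFoundedLT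
    (fun w : Σ v, G.Walk v v ↦ Odd w.2.length) (fun w ↦ w.2.length) ⟨⟨v, q⟩, hq⟩
  exact ⟨u, p, hp_odd, fun r hr ↦ (le_total _ _).elim id (hp_min (j := ⟨_, r⟩) hr)⟩

namespace IsShortestOddClosedWalk

variable {p : G.Walk u u}

theorem three_le_length (hp : IsShortestOddClosedWalk p) : 3 ≤ p.length := by
  have h_ne_one : p.length ≠ 1 := fun h ↦ G.irrefl (p.adj_of_length_eq_one h)
  have := hp.odd_length.pos
  have h_ne_two : p.length ≠ 2 := fun h ↦ absurd (h ▸ hp.odd_length) (by decide)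
  omega

theorem min_val_sub_le_length (hp : IsShortestOddClosedWalk p) {i j : Fin p.length}
    (q : G.Walk (p.getVert i) (p.getVert j)) :
    min (i - j).val (j - i).val ≤ q.length := by
  rcases eq_or_ne i j with rfl | hij
  · have : NeZero p.length := ⟨i.pos.ne'⟩
    simp
  obtain ⟨a, ha⟩ := exists_walk_getVert_length_eq_val_sub p i j
  obtain ⟨b, hb⟩ := exists_walk_getVert_length_eq_val_sub p j i
  have h_arcs : b.length + a.length = p.length := by
    rw [ha, hb, val_sub_add_val_sub_of_ne hij]
  have h_close_a := hp.length_le (a.append q.reverse)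
  have h_close_b := hp.length_le (b.append q)
  have h_odd := hp.odd_length
  simp only [Walk.length_append, Walk.length_reverse, Nat.odd_iff] at h_close_a h_close_b h_odd
  omega

theorem adj_getVert_iff (hp : IsShortestOddClosedWalk p) {i j : Fin p.length} :
    G.Adj (p.getVert i) (p.getVert j) ↔ (cycleGraph p.length).Adj i j := by
  rw [cycleGraph_adj']
  constructor
  · intro h
    have h_ne : i ≠ j := by
      rintro rfl
      exact G.irrefl h
    have h_le : min (i - j).val (j - i).val ≤ 1 := hp.min_val_sub_le_length h.toWalk
    have h_sum := val_sub_add_val_sub_of_ne h_ne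
    omega
  · rintro (h | h)
    · obtain ⟨q, hq⟩ := exists_walk_getVert_length_eq_val_sub p j i
      exact (q.adj_of_length_eq_one (hq.trans h)).symm
    · obtain ⟨q, hq⟩ := exists_walk_getVert_length_eq_val_sub p i j
      exact q.adj_of_length_eq_one (hq.trans h)

theorem injective_getVert (hp : IsShortestOddClosedWalk p) :
    Function.Injective fun i : Fin p.length ↦ p.getVert i := by
  intro i j hij
  by_contra h_ne
  have h_le : min (i - j).val (j - i).val ≤ 0 :=
    (hp.min_val_sub_le_length (Walk.nil.copy rfl hij)).trans_eq (Walk.length_copy ..)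
  have h_sum := val_sub_add_val_sub_of_ne h_ne
  omega

theorem cycleGraph_isIndContained (hp : IsShortestOddClosedWalk p) : cycleGraph p.length ⊴ G :=
  ⟨⟨⟨_, hp.injective_getVert⟩, hp.adj_getVert_iff⟩⟩

end IsShortestOddClosedWalk

theorem exists_odd_cycleGraph_isIndContained (hG : ¬ G.IsBipartite) :
    ∃ k, 3 ≤ k ∧ Odd k ∧ cycleGraph k ⊴ G := by
  obtain ⟨u, p, hp⟩ := exists_isShortestOddClosedWalk hG
  exact ⟨p.length, hp.three_le_length, hp.odd_length, hp.cycleGraph_isIndContained⟩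

end

theorem stmt_8_general {V : Type*} (G : SimpleGraph V)
    (htriangle : ∀ a b c : V, G.Adj a b → G.Adj b c → G.Adj c a → False)
    (hodd : ∀ k : ℕ, 5 ≤ k → Odd k → ¬ ContainsInduced G (SimpleGraph.cycleGraph k)) :
    ∃ S : Set V, (∀ v ∈ S, ∀ w ∈ S, ¬ G.Adj v w) ∧ (∀ v ∈ Sᶜ, ∀ w ∈ Sᶜ, ¬ G.Adj v w) := by
  suffices hG : G.IsBipartite by
    obtain ⟨S, hS, hSc⟩ := exists_isIndepSet_and_isIndepSet_compl hG
    exact ⟨S, fun v hv w hw h ↦ hS hv hw h.ne h, fun v hv w hw h ↦ hSc hv hw h.ne h⟩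
  by_contra hG
  obtain ⟨k, hk_three, hk_odd, hk⟩ := exists_odd_cycleGraph_isIndContained hG
  rcases le_or_gt 5 k with hk_five | hk_five
  · exact hodd k hk_five hk_odd (containsInduced_iff_isIndContained.2 hk)
  · obtain rfl : k = 3 := by grind
    obtain ⟨f⟩ := hk
    exact htriangle (f 0) (f 1) (f 2) (f.map_adj_iff.2 (by decide)) (f.map_adj_iff.2 (by decide))
      (f.map_adj_iff.2 (by decide))

theorem stmt_8 {V : Type*} [Fintype V] (G : SimpleGraph V)
    (htriangle : ∀ a b c : V, G.Adj a b → G.Adj b c → G.Adj c a → False)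
    (hodd : ∀ k : ℕ, 5 ≤ k → Odd k → ¬ ContainsInduced G (SimpleGraph.cycleGraph k)) :
    ∃ S : Set V, (∀ v ∈ S, ∀ w ∈ S, ¬ G.Adj v w) ∧ (∀ v ∈ Sᶜ, ∀ w ∈ Sᶜ, ¬ G.Adj v w) :=
  stmt_8_general G htriangle hodd
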